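/- Let h : ℝⁿ → ℝ be a nonnegative measurable function, and suppose there exists C₀ ≥ 1 such that ∫_{B_ρ} h(X) dX ≤ C₀ ρ² for every ρ ≥ C₀. Then there exist C₁ > 0 and R₀ > 0 such that ∫_{A_{√R,R}} h(X)/|X|² dX ≤ C₁ log R for every R ≥ R₀, where A_{√R,R} := {X ∈ ℝⁿ : √R ≤ |X| ≤ R}. -/

import Mathlib

open MeasureTheory Real

noncomputable section

/-!
The annulus `√R ≤ |X| ≤ R` is covered by dyadic shells `r ≤ |X| < 2r`, with `r = 2ᵏ√R`. On such a
shell `|X|⁻² ≤ r⁻²`, while the integral of `h` over it is at most `C₀(2r)²` by hypothesis, so each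
shell contributes at most `4C₀` (`lintegral_shell_le`). About `log₂ √R` shells are needed, which is
at most `2 log R` for `R ≥ 3`.
-/

theorem lintegral_shell_le {n : ℕ}
    {h : EuclideanSpace ℝ (Fin n) → ℝ} (hmeas : Measurable h) (hpos : ∀ X, 0 ≤ h X)
    {C₀ : ℝ} (hC₀ : 1 ≤ C₀)
    (hbound : ∀ ρ ≥ C₀,
      ∫⁻ X in Metric.ball (0 : EuclideanSpace ℝ (Fin n)) ρ, ENNReal.ofReal (h X)
        ≤ ENNReal.ofReal (C₀ * ρ ^ 2)) {r : ℝ} (hr : C₀ ≤ r) :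
    ∫⁻ X in {X : EuclideanSpace ℝ (Fin n) | r ≤ ‖X‖ ∧ ‖X‖ < 2 * r},
      ENNReal.ofReal (h X / ‖X‖ ^ 2) ≤ ENNReal.ofReal (4 * C₀) := by
  have hr0 : 0 < r := by linarith
  have hS : MeasurableSet {X : EuclideanSpace ℝ (Fin n) | r ≤ ‖X‖ ∧ ‖X‖ < 2 * r} :=
    (measurableSet_le measurable_const measurable_norm).inter
      (measurableSet_lt measurable_norm measurable_const)
  calc ∫⁻ X in {X : EuclideanSpace ℝ (Fin n) | r ≤ ‖X‖ ∧ ‖X‖ < 2 * r},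
        ENNReal.ofReal (h X / ‖X‖ ^ 2)
      ≤ ∫⁻ X in {X : EuclideanSpace ℝ (Fin n) | r ≤ ‖X‖ ∧ ‖X‖ < 2 * r},
        ENNReal.ofReal (1 / r ^ 2) * ENNReal.ofReal (h X) := by
        refine setLIntegral_mono' hS fun X hX => ?_
        rw [← ENNReal.ofReal_mul (by positivity), one_div_mul_eq_div]
        have h1 : r ≤ ‖X‖ := hX.1
        have h2 := hpos X
        gcongr
    _ ≤ ∫⁻ X in Metric.ball (0 : EuclideanSpace ℝ (Fin n)) (2 * r),
        ENNReal.ofReal (1 / r ^ 2) * ENNReal.ofReal (h X) :=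
        lintegral_mono_set fun X hX => by simpa using hX.2
    _ = ENNReal.ofReal (1 / r ^ 2) *
        ∫⁻ X in Metric.ball (0 : EuclideanSpace ℝ (Fin n)) (2 * r), ENNReal.ofReal (h X) :=
        lintegral_const_mul _ hmeas.ennreal_ofReal
    _ ≤ ENNReal.ofReal (1 / r ^ 2) * ENNReal.ofReal (C₀ * (2 * r) ^ 2) := by
        gcongr
        exact hbound _ (by linarith)
    _ = ENNReal.ofReal (4 * C₀) := by
        rw [← ENNReal.ofReal_mul (by positivity)]
        congr 1
        field_simp
        ring

theorem lintegral_dyadic_le {n : ℕ}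
    {h : EuclideanSpace ℝ (Fin n) → ℝ} (hmeas : Measurable h) (hpos : ∀ X, 0 ≤ h X)
    {C₀ : ℝ} (hC₀ : 1 ≤ C₀)
    (hbound : ∀ ρ ≥ C₀,
      ∫⁻ X in Metric.ball (0 : EuclideanSpace ℝ (Fin n)) ρ, ENNReal.ofReal (h X)
        ≤ ENNReal.ofReal (C₀ * ρ ^ 2)) {s : ℝ} (hs : C₀ ≤ s) (N : ℕ) :
    ∫⁻ X in {X : EuclideanSpace ℝ (Fin n) | s ≤ ‖X‖ ∧ ‖X‖ < 2 ^ N * s},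
      ENNReal.ofReal (h X / ‖X‖ ^ 2) ≤ ENNReal.ofReal (N * (4 * C₀)) := by
  induction N with
  | zero =>
    have : {X : EuclideanSpace ℝ (Fin n) | s ≤ ‖X‖ ∧ ‖X‖ < 2 ^ 0 * s} = ∅ := by
      ext X
      simp
    rw [this]
    simp
  | succ N ih =>
    have hle : C₀ ≤ 2 ^ N * s :=
      hs.trans (le_mul_of_one_le_left (by linarith) (one_le_pow₀ (by norm_num)))
    refine (lintegral_mono_set (t := {X : EuclideanSpace ℝ (Fin n) | s ≤ ‖X‖ ∧ ‖X‖ < 2 ^ N * s} ∪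
      {X | 2 ^ N * s ≤ ‖X‖ ∧ ‖X‖ < 2 * (2 ^ N * s)}) fun X hX => ?_).trans
      ((lintegral_union_le _ _ _).trans
      ((add_le_add ih (lintegral_shell_le hmeas hpos hC₀ hbound hle)).trans_eq ?_))
    · rcases lt_or_ge ‖X‖ (2 ^ N * s) with hlt | hge
      · exact Or.inl ⟨hX.1, hlt⟩
      · exact Or.inr ⟨hge, hX.2.trans_eq (by ring)⟩
    · rw [← ENNReal.ofReal_add (by positivity) (by positivity)]
      push_cast
      ring_nf

/-- if `h : ℝⁿ → ℝ` is nonnegative and measurable with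
`∫_{B_ρ} h ≤ C₀ρ²` for every `ρ ≥ C₀` (for some `C₀ ≥ 1`), then there are `C₁ > 0` and
`R₀ > 0` such that `∫_{A_{√R,R}} h(X)/|X|² dX ≤ C₁ log R` for every `R ≥ R₀`. -/
theorem annulus_log_estimate (n : ℕ)
    (h : EuclideanSpace ℝ (Fin n) → ℝ) (hmeas : Measurable h) (hpos : ∀ X, 0 ≤ h X)
    (C₀ : ℝ) (hC₀ : 1 ≤ C₀)
    (hbound : ∀ ρ ≥ C₀,
      ∫⁻ X in Metric.ball (0 : EuclideanSpace ℝ (Fin n)) ρ, ENNReal.ofReal (h X)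
        ≤ ENNReal.ofReal (C₀ * ρ ^ 2)) :
    ∃ C₁ > (0 : ℝ), ∃ R₀ > (0 : ℝ), ∀ R ≥ R₀,
      ∫⁻ X in {X : EuclideanSpace ℝ (Fin n) | Real.sqrt R ≤ ‖X‖ ∧ ‖X‖ ≤ R},
          ENNReal.ofReal (h X / ‖X‖ ^ 2)
        ≤ ENNReal.ofReal (C₁ * Real.log R) := by
  refine ⟨8 * C₀, by linarith, C₀ ^ 2 + 3, by positivity, fun R hR => ?_⟩
  have hR3 : 3 ≤ R := by nlinarith [sq_nonneg C₀]
  have hs : C₀ ≤ √R := Real.le_sqrt_of_sq_le (by linarith)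
  have hs0 : 0 < √R := by linarith
  have hss : √R * √R = R := Real.mul_self_sqrt (by linarith)
  obtain ⟨m, hm, hm'⟩ := exists_nat_pow_near (hC₀.trans hs) (one_lt_two : (1 : ℝ) < 2)
  have hlog : (m : ℝ) * Real.log 2 ≤ Real.log R / 2 := by
    rw [← Real.log_sqrt (by linarith), ← Real.log_pow]
    exact Real.log_le_log (by positivity) hm
  have hlog1 : 1 ≤ Real.log R := by
    rw [Real.le_log_iff_exp_le (by linarith)]
    linarith [Real.exp_one_lt_d9]
  have hcount : ((m + 1 : ℕ) : ℝ) ≤ 2 * Real.log R := by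
    push_cast
    nlinarith [Real.log_two_gt_d9, (Nat.cast_nonneg m : (0 : ℝ) ≤ m)]
  refine (lintegral_mono_set fun X hX => ?_).trans
    ((lintegral_dyadic_le hmeas hpos hC₀ hbound hs (m + 1)).trans
      (ENNReal.ofReal_le_ofReal ?_))
  · exact ⟨hX.1, hX.2.trans_lt (by nlinarith)⟩
  · nlinarith
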